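/- arXiv:1808.09952 — 2 statements merged into one kernel-verified Lean document; each statement's English description precedes it below -/
import Mathlib

section
/- Let A be a unital C*-algebra and φ : A → ℂ continuous with φ(1) = 1 and φ(x)φ(y) ∈ σ(xy) for all x,y. Then φ(x + y) = φ(x) + φ(y) for all self-adjoint x, y ∈ A. -/
/-!
The condition gives `φ u * φ u⁻¹ = 1` for every invertible `u`, hence
`φ a / φ u ∈ σ(a u⁻¹)`. Let `y` be invertible and suppose `b = x y⁻¹` has real spectrum.
Since `x + λ y = (b + λ) y`, one gets `φ (x + λ y) = φ y * (T λ + λ)` with `T λ ∈ σ(b) ⊆ ℝ`.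
For non-real `μ`, comparing `x + λ y` with the invertible `x + μ y` yields `t ∈ σ(b)` with
`(T λ + λ) (t + μ) = (t + λ) (T μ + μ)`. If `λ` is real, the imaginary part forces `t = T λ`, and
then, provided `λ + T λ ≠ 0`, also `T μ = T λ`. Fixing one large real `λ` shows that `T` is
constant off the real line, so by continuity `φ (x + λ y) = φ x + λ φ y` for all `λ`
(`map_add_smul_of_real_spectrum`).

For self-adjoint `x` the hypothesis holds with `y = 1`, and also with `y = s²` for `s` self-adjoint
invertible, because `x s⁻²` is similar to the self-adjoint `s⁻¹ x s⁻¹`. Any self-adjoint `y` becomes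
such a square after adding a large scalar, and the case `y = 1` removes that scalar again.
-/

section Banach

variable {B : Type*} [NormedRing B] [NormedAlgebra ℂ B]

lemma map_mul_map_inv (φ : B → ℂ) (hmul : ∀ x y : B, φ x * φ y ∈ spectrum ℂ (x * y))
    [Nontrivial B] (u : Bˣ) : φ u * φ (↑u⁻¹ : B) = 1 := by
  have h := hmul u (↑u⁻¹ : B)
  rw [Units.mul_inv, spectrum.one_eq] at h
  exact h

/-- The Möbius transform `t ↦ (t + l) / (t + m)` accounts for every point of the spectrum of
`(x + l y) (x + m y)⁻¹` by a point of `σ(x y⁻¹)`. Nonemptiness matters only when `l = m`, where the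
quotient is `1`. -/
lemma exists_mem_spectrum_of_mem_quotient (x : B) (y w : Bˣ) (l m k : ℂ)
    (hw : (w : B) = x + m • (y : B)) (hne : (spectrum ℂ (x * (↑y⁻¹ : B))).Nonempty)
    (hk : k ∈ spectrum ℂ ((x + l • (y : B)) * (↑w⁻¹ : B))) :
    ∃ t ∈ spectrum ℂ (x * (↑y⁻¹ : B)), k * (t + m) = t + l := by
  rw [spectrum.mem_iff] at hk
  have e : algebraMap ℂ B k - (x + l • (y : B)) * (↑w⁻¹ : B)
      = ((k - 1) • (x * (↑y⁻¹ : B)) + algebraMap ℂ B (k * m - l)) * (↑(y * w⁻¹) : B) := by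
    have e1 : algebraMap ℂ B k = (k • (w : B)) * (↑w⁻¹ : B) := by
      rw [smul_mul_assoc, Units.mul_inv, Algebra.algebraMap_eq_smul_one]
    rw [e1, Units.val_mul, ← mul_assoc, ← sub_mul, hw]
    congr 1
    rw [add_mul, smul_mul_assoc, mul_assoc, Units.inv_mul, mul_one,
      Algebra.algebraMap_eq_smul_one, smul_mul_assoc, one_mul]
    module
  rw [e, Units.isUnit_mul_units] at hk
  by_cases h1 : k = 1
  · subst h1
    obtain ⟨t, ht⟩ := hne
    refine ⟨t, ht, ?_⟩
    by_contra hlm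
    apply hk
    rw [sub_self, zero_smul, zero_add]
    refine (IsUnit.mk0 _ ?_).map _
    intro h
    apply hlm
    linear_combination h
  · have hk1 : 1 - k ≠ 0 := sub_ne_zero.mpr (Ne.symm h1)
    refine ⟨(k * m - l) / (1 - k), ?_, by field_simp; ring⟩
    rw [spectrum.mem_iff]
    intro hu
    apply hk
    have : (k - 1) • (x * (↑y⁻¹ : B)) + algebraMap ℂ B (k * m - l)
        = algebraMap ℂ B (1 - k) *
          (algebraMap ℂ B ((k * m - l) / (1 - k)) - x * (↑y⁻¹ : B)) := by
      rw [mul_sub, ← map_mul, mul_div_cancel₀ _ hk1, ← Algebra.smul_def]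
      module
    rw [this]
    exact ((IsUnit.mk0 _ hk1).map _).mul hu

/-- Real spectrum is what makes the equation `(T l + l) (t + m) = (t + l) (T m + m)` rigid: it splits
into two real equations, which together determine `T m`. -/
theorem map_add_smul_of_real_spectrum [CompleteSpace B] [Nontrivial B] (φ : B → ℂ) (hc : Continuous φ)
    (hmul : ∀ x y : B, φ x * φ y ∈ spectrum ℂ (x * y)) (x : B) (y : Bˣ)
    (hreal : ∀ z ∈ spectrum ℂ (x * (↑y⁻¹ : B)), z.im = 0) (l : ℂ) :
    φ (x + l • (y : B)) = φ x + l * φ y := by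
  have hy := map_mul_map_inv φ hmul y
  set b := x * (↑y⁻¹ : B) with hb
  have key : ∀ l : ℂ, (x + l • (y : B)) = (b + algebraMap ℂ B l) * y := by
    intro l
    rw [add_mul, hb, mul_assoc, Units.inv_mul, mul_one, ← Algebra.smul_def]
  have hT : ∀ l : ℂ, ∃ T ∈ spectrum ℂ b, φ (x + l • (y : B)) = φ y * (T + l) := by
    intro l
    have h := hmul (x + l • (y : B)) (↑y⁻¹ : B)
    rw [key l, mul_assoc, Units.mul_inv, mul_one, ← key l] at h
    refine ⟨φ (x + l • (y : B)) * φ (↑y⁻¹ : B) - l, ?_, ?_⟩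
    · have h' : φ (x + l • (y : B)) * φ (↑y⁻¹ : B) - l + l
          ∈ spectrum ℂ (algebraMap ℂ B l + b) := by simpa [add_comm] using h
      exact spectrum.add_mem_add_iff.mp h'
    · linear_combination (-φ (x + l • (y : B))) * hy
  choose T hTs hTe using hT
  have hcmp : ∀ l m : ℂ, m.im ≠ 0 →
      ∃ t ∈ spectrum ℂ b, (T l + l) * (t + m) = (t + l) * (T m + m) := by
    intro l m hm
    have hu : IsUnit (x + m • (y : B)) := by
      rw [key m, Units.isUnit_mul_units]
      by_contra hn
      have hmem : -m ∈ spectrum ℂ b := by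
        rw [spectrum.mem_iff, ← IsUnit.neg_iff]
        simpa [add_comm] using hn
      have := hreal _ hmem
      simp at this
      exact hm this
    obtain ⟨w, hw⟩ := hu
    have hww := map_mul_map_inv φ hmul w
    obtain ⟨t, ht, hte⟩ := exists_mem_spectrum_of_mem_quotient x y w l m _ hw ⟨_, hTs l⟩
      (hmul _ _)
    refine ⟨t, ht, ?_⟩
    rw [hw, hTe m] at hww
    rw [hTe l] at hte
    linear_combination (T m + m) * hte - (T l + l) * (t + m) * hww
  -- A real parameter beyond the norm bound for the spectrum, so that `T c + c ≠ 0`.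
  set c : ℝ := ‖b‖ * ‖(1 : B)‖ + 1 with hcdef
  have hTc : (T c).re + c ≠ 0 := by
    have h1 := spectrum.norm_le_norm_mul_of_mem (hTs c)
    have h2 := Complex.abs_re_le_norm (T c)
    have h3 := neg_abs_le (T c).re
    linarith
  have hconst : ∀ m : ℂ, m.im ≠ 0 → T m = T c := by
    intro m hm
    obtain ⟨t, ht, hte⟩ := hcmp c m hm
    have i1 := hreal _ ht
    have i2 := hreal _ (hTs c)
    have i3 := hreal _ (hTs m)
    have him := congrArg Complex.im hte
    have hre := congrArg Complex.re hte
    simp only [Complex.mul_im, Complex.mul_re, Complex.add_im, Complex.add_re, i1, i2, i3,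
      Complex.ofReal_re, Complex.ofReal_im, zero_add, add_zero, zero_mul, sub_zero]
      at him hre
    have h1 : (T c).re = t.re := by
      have := mul_right_cancel₀ hm him
      linarith
    rw [← h1] at hre
    have h2 := mul_left_cancel₀ hTc hre
    exact Complex.ext (by linarith) (by rw [i2, i3])
  have hdense : Dense {m : ℂ | m.im ≠ 0} := by
    have h := (dense_compl_singleton (0 : ℝ)).preimage Complex.isOpenMap_im
    exact h
  have hall : (fun m : ℂ => φ (x + m • (y : B))) = fun m => φ y * (T c + m) := by
    refine Continuous.ext_on hdense (by fun_prop) (by fun_prop) ?_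
    intro m hm
    simp only [hTe m, hconst m hm]
  have h0 := congrFun hall 0
  have hl := congrFun hall l
  simp only [zero_smul, add_zero] at h0
  rw [h0, hl]
  ring

end Banach

section CStar

variable {B : Type*} [CStarAlgebra B]

lemma exists_selfAdjoint_unit_sq (y : B) (hy : IsSelfAdjoint y) :
    ∃ (c : ℝ) (s : Bˣ), IsSelfAdjoint (s : B) ∧
      (s : B) * s = y + algebraMap ℝ B c := by
  set c : ℝ := ‖y‖ * ‖(1 : B)‖ + 1
  have hpos : ∀ t ∈ spectrum ℝ y, 0 < t + c := by
    intro t ht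
    have h1 := spectrum.norm_le_norm_mul_of_mem ht
    rw [Real.norm_eq_abs] at h1
    have h2 := neg_abs_le t
    simp only [c]
    linarith
  have hunit : IsUnit (cfc (fun t : ℝ => Real.sqrt (t + c)) y) := by
    rw [isUnit_cfc_iff (fun t : ℝ => Real.sqrt (t + c)) y]
    intro t ht
    exact (Real.sqrt_pos.mpr (hpos t ht)).ne'
  obtain ⟨s, hs⟩ := hunit
  refine ⟨c, s, ?_, ?_⟩
  · rw [hs]
    exact cfc_predicate _ y
  · rw [hs, ← cfc_mul _ _ y]
    rw [cfc_congr (g := fun t : ℝ => t + c)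
      (fun t ht => Real.mul_self_sqrt (hpos t ht).le)]
    rw [cfc_add_const c (fun t : ℝ => t) y, cfc_id' ℝ y]

/-- `x s⁻²` is conjugate by `s` to the self-adjoint element `s⁻¹ x s⁻¹`. -/
lemma real_spectrum_mul_inv_sq (x : B) (hx : IsSelfAdjoint x) (s : Bˣ)
    (hs : IsSelfAdjoint (s : B)) :
    ∀ z ∈ spectrum ℂ (x * (↑(s * s)⁻¹ : B)), z.im = 0 := by
  intro z hz
  have hsi : IsSelfAdjoint (↑s⁻¹ : B) := by
    have h : star s = s := Units.ext hs
    have h2 : star s⁻¹ = s⁻¹ := by rw [star_inv, h]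
    exact congrArg Units.val h2
  have e : x * (↑(s * s)⁻¹ : B) = s * ((↑s⁻¹ : B) * x * (↑s⁻¹ : B)) * (↑s⁻¹ : B) := by
    rw [mul_inv_rev, Units.val_mul]
    simp only [← mul_assoc, Units.mul_inv, one_mul]
  rw [e, spectrum.units_conjugate] at hz
  have h : IsSelfAdjoint ((↑s⁻¹ : B) * x * (↑s⁻¹ : B)) := by
    simpa [hsi.star_eq] using hx.conjugate (↑s⁻¹ : B)
  rw [h.mem_spectrum_eq_re hz]
  simp

end CStar

variable {A : Type*} [NormedRing A] [StarRing A] [CStarRing A] [NormedAlgebra ℂ A] [CompleteSpace A] [StarModule ℂ A]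

theorem stmt_17 (φ : A → ℂ) (hc : Continuous φ)
    (hone : φ 1 = 1)
    (hmul : ∀ x y : A, φ x * φ y ∈ spectrum ℂ (x * y)) :
    ∀ x y : A, IsSelfAdjoint x → IsSelfAdjoint y →
      φ (x + y) = φ x + φ y := by
  intro x y hx hy
  let _ : CStarAlgebra A := {}
  -- In the zero ring every spectrum is empty.
  have : Nontrivial A := by
    by_contra h
    rw [not_nontrivial_iff_subsingleton] at h
    have := hmul 1 1
    rw [spectrum.of_subsingleton] at this
    exact this
  have hshift : ∀ a : A, IsSelfAdjoint a → ∀ c : ℝ,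
      φ (a + algebraMap ℝ A c) = φ a + c := by
    intro a ha c
    have h := map_add_smul_of_real_spectrum φ hc hmul a (1 * 1)
      (real_spectrum_mul_inv_sq a ha 1 (by simp)) (c : ℂ)
    simpa [hone, Algebra.algebraMap_eq_smul_one] using h
  obtain ⟨c, s, hs, hss⟩ := exists_selfAdjoint_unit_sq y hy
  have h := map_add_smul_of_real_spectrum φ hc hmul x (s * s)
    (real_spectrum_mul_inv_sq x hx s hs) 1
  rw [one_smul, one_mul, Units.val_mul, hss, ← add_assoc, hshift _ (hx.add hy), hshift _ hy] at h
  linear_combination h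
end

section
/- Let A be a unital C*-algebra and φ : A → ℂ continuous with φ(1) = 1 and φ(x)φ(y) ∈ σ(xy) for all x,y. Then the map ψ(x) := φ(Re x) + iφ(Im x), where Re x = (x + x*)/2 and Im x = (x − x*)/(2i), is a character of A (a multiplicative linear functional). -/
/-!
The argument avoids the Kowalski–Słodkowski and Gleason–Kahane–Żelazko theorems; it rests on the
spectrum of a self-adjoint element being real.

* `φ x * φ x⁻¹ ∈ σ(1)` makes `φ` inverse-preserving and homogeneous on invertible elements.
* For self-adjoint `x` and nonreal `z`, the value `φ (z - x)` lies in `z - σ(x)`, so it is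
  `z - s z` with `s z` real. The condition `φ (z - x) * φ (w - x)⁻¹ ∈ σ ((z - x) (w - x)⁻¹)` says
  that `(z - s z) / (w - s w) = (z - r) / (w - r)` for some real `r`; comparing imaginary parts
  forces `s` to be constant (`exists_shift`), and letting `z → 0` along the imaginary axis identifies
  the constant as `φ x` (`map_sub_scalar`).
* For self-adjoint `x`, `y`, multiplying `(z - x) (w - y)` by the inverse of either factor leaves a
  conjugate of the other one, whose spectrum is known. This gives
  `φ ((z - x) (w - y)) = (z - φ x) (w - r) = (z - s) (w - φ y)` with `r`, `s` real
  (`exists_map_mul`). For suitable `z`, `w`, and after replacing `x` by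
  `x + 1` if need be, these equations force `r = φ y` and `s = φ x`.
* With `z = w = i`, comparing `(i - t x) (i - t y)` to its first-order part as `t → 0` yields
  additivity on self-adjoint elements (`map_add_sa`); with `y = x` and `z = i = -w`, it yields
  `φ (x²) = (φ x)²` (`map_sq_sa`).
* Hence `ψ` is linear and preserves squares, and a linear functional preserving squares is
  multiplicative (`jordan_mul`).
-/

variable {A : Type*} [NormedRing A] [StarRing A] [CStarRing A] [NormedAlgebra ℂ A] [CompleteSpace A] [StarModule ℂ A]

namespace SpectralMul

/-! ### Spectra of self-adjoint elements and their Möbius transforms -/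

theorem mem_real {x : A} (hx : IsSelfAdjoint x) {μ : ℂ} (h : μ ∈ spectrum ℂ x) :
    ∃ s : ℝ, μ = s := by
  let _ : CStarAlgebra A := {}
  exact ⟨μ.re, hx.mem_spectrum_eq_re h⟩

theorem isUnit_sub {x : A} (hx : IsSelfAdjoint x) {z : ℂ} (hz : z.im ≠ 0) :
    IsUnit (algebraMap ℂ A z - x) := by
  by_contra h
  obtain ⟨s, rfl⟩ := mem_real hx (spectrum.mem_iff.2 h)
  simp at hz

theorem mem_sub {x : A} (hx : IsSelfAdjoint x) {z μ : ℂ}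
    (h : μ ∈ spectrum ℂ (algebraMap ℂ A z - x)) : ∃ s : ℝ, μ = z - s := by
  have : z - μ ∈ spectrum ℂ x := by
    rw [spectrum.mem_iff] at h ⊢
    rw [← IsUnit.neg_iff] at h
    convert h using 2
    rw [map_sub]; abel
  obtain ⟨s, hs⟩ := mem_real hx this
  exact ⟨s, by rw [← hs]; ring⟩

/-- The spectrum of the Möbius transform `(z - x) (w - x)⁻¹` of a self-adjoint element. -/
theorem mem_moebius {x v : A} (hx : IsSelfAdjoint x) {z w μ : ℂ}
    (hv : (algebraMap ℂ A w - x) * v = 1) (hv' : v * (algebraMap ℂ A w - x) = 1)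
    (h : μ ∈ spectrum ℂ ((algebraMap ℂ A z - x) * v)) : ∃ s : ℝ, μ * (w - s) = z - s := by
  have hu : IsUnit (algebraMap ℂ A w - x) := ⟨⟨_, v, hv, hv'⟩, rfl⟩
  have h1 : ¬ IsUnit (algebraMap ℂ A (μ * w - z) - algebraMap ℂ A (μ - 1) * x) := by
    intro hc
    apply spectrum.mem_iff.1 h
    have huv : IsUnit v := ⟨⟨v, _, hv', hv⟩, rfl⟩
    convert hc.mul huv using 1
    have : algebraMap ℂ A μ = algebraMap ℂ A μ * ((algebraMap ℂ A w - x) * v) := by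
      rw [hv, mul_one]
    rw [this]
    simp only [map_sub, map_mul, map_one]
    noncomm_ring
  by_cases hμ : μ = 1
  · subst hμ
    have hwz : w = z := by
      by_contra hne
      apply h1
      simpa using (sub_ne_zero.2 hne).isUnit.map (algebraMap ℂ A)
    exact ⟨0, by rw [hwz]; ring⟩
  · have hne := sub_ne_zero.2 hμ
    have : (μ * w - z) / (μ - 1) ∈ spectrum ℂ x := by
      rw [spectrum.mem_iff]
      intro hc
      apply h1
      convert (hne.isUnit.map (algebraMap ℂ A)).mul hc using 1
      rw [mul_sub, ← map_mul, mul_div_cancel₀ _ hne]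
    obtain ⟨s, hs⟩ := mem_real hx this
    refine ⟨s, ?_⟩
    rw [div_eq_iff hne] at hs
    linear_combination hs

/-! ### Invertible elements -/

theorem nontriv {φ : A → ℂ} (hmul : ∀ x y : A, φ x * φ y ∈ spectrum ℂ (x * y)) :
    Nontrivial A := by
  by_contra h
  rw [not_nontrivial_iff_subsingleton] at h
  have := hmul 1 1
  simp [spectrum.of_subsingleton] at this

theorem map_inv {φ : A → ℂ} (hmul : ∀ x y : A, φ x * φ y ∈ spectrum ℂ (x * y)) {x y : A}
    (h : x * y = 1) : φ x * φ y = 1 := by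
  have := nontriv hmul
  simpa [h, spectrum.one_eq] using hmul x y

theorem map_mem {φ : A → ℂ} (hone : φ 1 = 1)
    (hmul : ∀ x y : A, φ x * φ y ∈ spectrum ℂ (x * y)) (x : A) : φ x ∈ spectrum ℂ x := by
  simpa [hone] using hmul x 1

theorem map_smul_unit {φ : A → ℂ} (hmul : ∀ x y : A, φ x * φ y ∈ spectrum ℂ (x * y)) (c : ℂ)
    {x : A} (hx : IsUnit x) : φ (c • x) = c * φ x := by
  have := nontriv hmul
  obtain ⟨u, rfl⟩ := hx
  have h := hmul (c • (u : A)) (u⁻¹ : Aˣ)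
  have h1 := map_inv hmul (Units.mul_inv u)
  rw [smul_mul_assoc, Units.mul_inv, ← Algebra.algebraMap_eq_smul_one, spectrum.scalar_eq,
    Set.mem_singleton_iff] at h
  linear_combination φ u * h - φ (c • (u : A)) * h1

/-! ### Scalar translates of a self-adjoint element -/

/-- For self-adjoint `x`, the map `z ↦ z - φ (z - x)` is a real constant off the real axis. -/
theorem exists_shift {φ : A → ℂ} (hone : φ 1 = 1)
    (hmul : ∀ x y : A, φ x * φ y ∈ spectrum ℂ (x * y)) {x : A} (hx : IsSelfAdjoint x) :
    ∃ s : ℝ, ∀ z : ℂ, z.im ≠ 0 → φ (algebraMap ℂ A z - x) = z - s := by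
  choose s hs using fun z : ℂ => mem_sub hx (map_mem hone hmul (algebraMap ℂ A z - x))
  have key : ∀ z w : ℂ, w.im ≠ 0 → ∃ r : ℝ, z.im * (s w - r) + w.im * (r - s z) = 0 ∧
      z.re * (s w - r) + w.re * (r - s z) + r * (s z - s w) = 0 := by
    intro z w hw
    obtain ⟨u, hu⟩ := isUnit_sub hx hw
    have huv := u.mul_inv
    have hvu := u.inv_mul
    rw [hu] at huv hvu
    have hi := map_inv hmul huv
    obtain ⟨r, hr⟩ := mem_moebius hx huv hvu (hmul (algebraMap ℂ A z - x) (u⁻¹ : Aˣ))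
    rw [hs] at hi hr
    have e : (z - s z) * (w - r) = (z - r) * (w - s w) := by
      linear_combination (w - s w) * hr - (z - s z) * (w - r) * hi
    refine ⟨r, ?_, ?_⟩
    · have := congrArg Complex.im e
      simp at this
      linarith
    · have := congrArg Complex.re e
      simp at this
      linarith
  -- On a horizontal line the two imaginary parts cancel.
  have line : ∀ z w : ℂ, w.im ≠ 0 → z.im = w.im → s z = s w := by
    intro z w hw h
    obtain ⟨r, h1, -⟩ := key z w hw
    rw [h] at h1
    have : w.im * (s w - s z) = 0 := by linarith
    rcases mul_eq_zero.1 this with h | h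
    · exact absurd h hw
    · linarith
  -- Two points `w`, `w + 1` of one line, compared with `z` on another line, share the same `r`.
  have all : ∀ z w : ℂ, z.im ≠ 0 → w.im ≠ 0 → s z = s w := by
    intro z w hz hw
    by_cases h : z.im = w.im
    · exact line z w hw h
    have hw' : (w + 1).im ≠ 0 := by simpa using hw
    have hl : s (w + 1) = s w := line _ _ hw (by simp)
    obtain ⟨r, h1, h2⟩ := key z w hw
    obtain ⟨r', h3, h4⟩ := key z (w + 1) hw'
    rw [hl] at h3 h4
    simp only [Complex.add_im, Complex.one_im, add_zero, Complex.add_re, Complex.one_re] at h3 h4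
    have hr : r' = r := by
      have : (z.im - w.im) * (r' - r) = 0 := by linarith
      rcases mul_eq_zero.1 this with h' | h'
      · exact absurd (sub_eq_zero.1 h') h
      · linarith
    subst hr
    have h5 : r' = s z := by linarith
    subst h5
    have : z.im * (s w - s z) = 0 := by linarith
    rcases mul_eq_zero.1 this with h' | h'
    · exact absurd h' hz
    · linarith
  exact ⟨s Complex.I, fun z hz => by rw [hs, all z Complex.I hz (by simp)]⟩

/-- The constant of `exists_shift` is `φ x`; this is the only step that uses continuity. -/
theorem map_sub_scalar {φ : A → ℂ} (hc : Continuous φ) (hone : φ 1 = 1)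
    (hmul : ∀ x y : A, φ x * φ y ∈ spectrum ℂ (x * y)) {x : A} (hx : IsSelfAdjoint x) :
    ∃ s : ℝ, φ x = s ∧ ∀ z : ℂ, z.im ≠ 0 → φ (algebraMap ℂ A z - x) = z - s := by
  obtain ⟨s, hs⟩ := exists_shift hone hmul hx
  refine ⟨s, ?_, hs⟩
  have h1 : Filter.Tendsto (fun t : ℝ => φ ((-1 : ℂ) • (algebraMap ℂ A (t * Complex.I) - x)))
      (nhdsWithin 0 {0}ᶜ) (nhds (φ x)) := by
    have hcont : Continuous
        (fun t : ℝ => φ ((-1 : ℂ) • (algebraMap ℂ A (t * Complex.I) - x))) := by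
      have := continuous_algebraMap ℂ A
      fun_prop
    have := hcont.tendsto 0
    simp only [Complex.ofReal_zero, zero_mul, map_zero, zero_sub, neg_smul, one_smul,
      neg_neg] at this
    refine Filter.Tendsto.mono_left ?_ nhdsWithin_le_nhds
    simpa using this
  have h2 : Filter.Tendsto (fun t : ℝ => -((t : ℂ) * Complex.I - s))
      (nhdsWithin 0 {0}ᶜ) (nhds (s : ℂ)) := by
    have hcont : Continuous (fun t : ℝ => -((t : ℂ) * Complex.I - s)) := by fun_prop
    have := hcont.tendsto 0
    refine Filter.Tendsto.mono_left ?_ nhdsWithin_le_nhds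
    simpa using this
  refine tendsto_nhds_unique h1 (h2.congr' ?_)
  filter_upwards [self_mem_nhdsWithin] with t ht
  have hi : ((t : ℂ) * Complex.I).im ≠ 0 := by simpa using ht
  rw [map_smul_unit hmul _ (isUnit_sub hx hi), hs _ hi]
  ring

theorem isSelfAdjoint_smul {x : A} (hx : IsSelfAdjoint x) (t : ℝ) :
    IsSelfAdjoint ((t : ℂ) • x) := by
  rw [isSelfAdjoint_iff, star_smul, hx.star_eq]
  simp

theorem map_smul_sa {φ : A → ℂ} (hc : Continuous φ) (hone : φ 1 = 1)
    (hmul : ∀ x y : A, φ x * φ y ∈ spectrum ℂ (x * y)) {x : A} (hx : IsSelfAdjoint x) (t : ℝ) :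
    φ ((t : ℂ) • x) = t * φ x := by
  have := nontriv hmul
  by_cases ht : t = 0
  · subst ht
    have := map_mem hone hmul (0 : A)
    simpa [spectrum.zero_eq] using this
  obtain ⟨s, h1, h2⟩ := map_sub_scalar hc hone hmul hx
  obtain ⟨r, h3, h4⟩ := map_sub_scalar hc hone hmul (isSelfAdjoint_smul hx t)
  have hi : ((t : ℂ) * Complex.I).im ≠ 0 := by simpa using ht
  have h5 := h4 _ hi
  rw [map_mul, ← Algebra.smul_def, ← smul_sub,
    map_smul_unit hmul _ (isUnit_sub hx (by simp)), h2 _ (by simp)] at h5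
  rw [h1, h3]
  linear_combination h5

theorem isSelfAdjoint_add_real {x : A} (hx : IsSelfAdjoint x) (t : ℝ) :
    IsSelfAdjoint (x + algebraMap ℂ A t) := by
  rw [Algebra.algebraMap_eq_smul_one]
  exact hx.add (isSelfAdjoint_smul (IsSelfAdjoint.one A) t)

theorem map_add_real {φ : A → ℂ} (hc : Continuous φ) (hone : φ 1 = 1)
    (hmul : ∀ x y : A, φ x * φ y ∈ spectrum ℂ (x * y)) {x : A} (hx : IsSelfAdjoint x) (t : ℝ) :
    φ (x + algebraMap ℂ A t) = φ x + t := by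
  obtain ⟨s, h1, h2⟩ := map_sub_scalar hc hone hmul hx
  obtain ⟨r, h3, h4⟩ := map_sub_scalar hc hone hmul (isSelfAdjoint_add_real hx t)
  have h5 := h4 (Complex.I + t) (by simp)
  have e : algebraMap ℂ A (Complex.I + t) - (x + algebraMap ℂ A t)
      = algebraMap ℂ A Complex.I - x := by rw [map_add]; abel
  rw [e, h2 _ (by simp)] at h5
  rw [h1, h3]
  linear_combination h5

/-! ### Products of two translates -/

/-- The two descriptions of `φ ((z - x) (w - y))`, obtained by cancelling either factor and using
that conjugation preserves the spectrum. -/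
theorem exists_map_mul {φ : A → ℂ} (hc : Continuous φ) (hone : φ 1 = 1)
    (hmul : ∀ x y : A, φ x * φ y ∈ spectrum ℂ (x * y)) {x y : A} (hx : IsSelfAdjoint x)
    (hy : IsSelfAdjoint y) {z w : ℂ} (hz : z.im ≠ 0) (hw : w.im ≠ 0) :
    ∃ r s : ℝ,
      φ ((algebraMap ℂ A z - x) * (algebraMap ℂ A w - y)) = (z - φ x) * (w - r) ∧
      φ ((algebraMap ℂ A z - x) * (algebraMap ℂ A w - y)) = (z - s) * (w - φ y) := by
  obtain ⟨a, ha, ha'⟩ := map_sub_scalar hc hone hmul hx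
  obtain ⟨b, hb, hb'⟩ := map_sub_scalar hc hone hmul hy
  obtain ⟨u, hu⟩ := isUnit_sub hx hz
  obtain ⟨v, hv⟩ := isUnit_sub hy hw
  have hiu := map_inv hmul u.mul_inv
  have hiv := map_inv hmul v.mul_inv
  have h1 := hmul (u * v : A) (u⁻¹ : Aˣ)
  have h2 := hmul (u * v : A) (v⁻¹ : Aˣ)
  rw [spectrum.units_conjugate, hv] at h1
  rw [Units.mul_inv_cancel_right, hu] at h2
  obtain ⟨r, hr⟩ := mem_sub hy h1
  obtain ⟨s, hs⟩ := mem_sub hx h2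
  rw [hu, ha' _ hz] at hiu
  rw [hv, hb' _ hw] at hiv
  rw [hu] at hr
  rw [hv] at hs
  refine ⟨r, s, ?_, ?_⟩
  · rw [ha, ← hr]
    linear_combination -φ ((algebraMap ℂ A z - x) * (algebraMap ℂ A w - y)) * hiu
  · rw [hb, ← hs]
    linear_combination -φ ((algebraMap ℂ A z - x) * (algebraMap ℂ A w - y)) * hiv

theorem map_mul_I {φ : A → ℂ} (hc : Continuous φ) (hone : φ 1 = 1)
    (hmul : ∀ x y : A, φ x * φ y ∈ spectrum ℂ (x * y)) {x y : A} (hx : IsSelfAdjoint x)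
    (hy : IsSelfAdjoint y) (hne : φ x ≠ φ y) :
    φ ((algebraMap ℂ A Complex.I - x) * (algebraMap ℂ A Complex.I - y))
      = (Complex.I - φ x) * (Complex.I - φ y) := by
  obtain ⟨a, ha, -⟩ := map_sub_scalar hc hone hmul hx
  obtain ⟨b, hb, -⟩ := map_sub_scalar hc hone hmul hy
  obtain ⟨r, s, h1, h2⟩ := exists_map_mul hc hone hmul hx hy (z := Complex.I) (w := Complex.I)
    (by simp) (by simp)
  rw [ha] at h1
  rw [hb] at h2
  rw [ha, hb]
  have e := h1.symm.trans h2
  have e1 := congrArg Complex.im e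
  have e2 := congrArg Complex.re e
  simp at e1 e2
  have hab : a - b ≠ 0 := fun h => hne (by rw [ha, hb, sub_eq_zero.1 h])
  have : (a - b) * (r - b) = 0 := by
    have hs : s = a + r - b := by linarith
    rw [hs] at e2
    linarith
  have hr : r = b := by
    rcases mul_eq_zero.1 this with h | h
    · exact absurd h hab
    · linarith
  rw [h1, hr]

/-! ### Additivity on self-adjoint elements -/

/-- Additivity up to a quadratic error. Since `(i - x) (i - y) = i (i - (x + y)) + x y`, the ratio
`μ` of the values of `φ` at `(i - x) (i - y)` and at `i - (x + y)` is within `O(‖x y‖)` of `i`. -/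
theorem first_order {φ : A → ℂ} (hc : Continuous φ) (hone : φ 1 = 1)
    (hmul : ∀ x y : A, φ x * φ y ∈ spectrum ℂ (x * y)) {x y : A} (hx : IsSelfAdjoint x)
    (hy : IsSelfAdjoint y) (hne : φ x ≠ φ y) :
    ‖φ (x + y) - φ x - φ y - Complex.I * (φ x * φ y)‖ * (1 - ‖x + y‖)
      ≤ ‖x * y‖ * ‖Complex.I - φ (x + y)‖ := by
  let _ : CStarAlgebra A := {}
  have := nontriv hmul
  obtain ⟨c, hcc, hc'⟩ := map_sub_scalar hc hone hmul (hx.add hy)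
  have h1 := map_mul_I hc hone hmul hx hy hne
  have hI : (Complex.I).im ≠ 0 := by simp
  obtain ⟨v, hv⟩ := isUnit_sub (hx.add hy) hI
  have hiv := map_inv hmul v.mul_inv
  have hm := hmul ((algebraMap ℂ A Complex.I - x) * (algebraMap ℂ A Complex.I - y)) (v⁻¹ : Aˣ)
  rw [hv, hc' _ hI] at hiv
  rw [h1] at hm
  set a := φ x
  set b := φ y
  set k := φ (v⁻¹ : Aˣ)
  set μ := (Complex.I - a) * (Complex.I - b) * k with hμ
  have hmem : (Complex.I - μ) * Complex.I ∈
      spectrum ℂ ((Complex.I - μ) • (x + y) - x * y) := by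
    rw [spectrum.mem_iff]
    intro hu
    apply spectrum.mem_iff.1 hm
    have hvu : IsUnit ((v⁻¹ : Aˣ) : A) := (v⁻¹).isUnit
    convert hu.neg.mul hvu using 1
    have e : algebraMap ℂ A μ = (algebraMap ℂ A μ * v) * (v⁻¹ : Aˣ) := by
      rw [mul_assoc, Units.mul_inv, mul_one]
    rw [e, ← sub_mul]
    congr 1
    rw [hv]
    simp only [Algebra.algebraMap_eq_smul_one, mul_sub, sub_mul, mul_smul_comm, smul_mul_assoc,
      mul_one, one_mul, smul_sub, smul_add, sub_smul, mul_smul]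
    rw [smul_comm μ Complex.I (1 : A)]
    abel
  have hn := spectrum.norm_le_norm_of_mem hmem
  have hn2 : ‖Complex.I - μ‖ ≤ ‖Complex.I - μ‖ * ‖x + y‖ + ‖x * y‖ := by
    calc ‖Complex.I - μ‖ = ‖(Complex.I - μ) * Complex.I‖ := by simp
      _ ≤ _ := hn
      _ ≤ _ := (norm_sub_le _ _).trans (by rw [norm_smul])
  have hval : φ (x + y) - a - b - Complex.I * (a * b)
      = (Complex.I - μ) * (Complex.I - φ (x + y)) * Complex.I := by
    rw [hcc]
    have : μ * (Complex.I - c) = (Complex.I - a) * (Complex.I - b) := by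
      rw [hμ]; linear_combination (Complex.I - a) * (Complex.I - b) * hiv
    linear_combination Complex.I * this + (c - a - b) * Complex.I_sq
  rw [hval, norm_mul, norm_mul, Complex.norm_I, mul_one]
  nlinarith [norm_nonneg (Complex.I - φ (x + y))]

theorem map_add_sa_of_ne {φ : A → ℂ} (hc : Continuous φ) (hone : φ 1 = 1)
    (hmul : ∀ x y : A, φ x * φ y ∈ spectrum ℂ (x * y)) {x y : A} (hx : IsSelfAdjoint x)
    (hy : IsSelfAdjoint y) (hne : φ x ≠ φ y) : φ (x + y) = φ x + φ y := by
  -- Apply `first_order` to `t x`, `t y`, divide by `t` and let `t` decrease to `0`.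
  have hle : ∀ t : ℝ, 0 < t →
      ‖φ (x + y) - φ x - φ y - t * (Complex.I * (φ x * φ y))‖ * (1 - t * ‖x + y‖)
        ≤ t * ‖x * y‖ * ‖Complex.I - t * φ (x + y)‖ := by
    intro t ht
    have ht0 : (t : ℂ) ≠ 0 := by exact_mod_cast ht.ne'
    have hxt := map_smul_sa hc hone hmul hx t
    have hyt := map_smul_sa hc hone hmul hy t
    have hst := map_smul_sa hc hone hmul (hx.add hy) t
    have h := first_order hc hone hmul (isSelfAdjoint_smul hx t) (isSelfAdjoint_smul hy t)
      (by rw [hxt, hyt]; exact fun h => hne (mul_left_cancel₀ ht0 h))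
    rw [← smul_add, hxt, hyt, hst, smul_mul_smul_comm, norm_smul, norm_smul, norm_mul] at h
    have e : (t : ℂ) * φ (x + y) - t * φ x - t * φ y - Complex.I * (t * φ x * (t * φ y))
        = t * (φ (x + y) - φ x - φ y - t * (Complex.I * (φ x * φ y))) := by ring
    rw [e, norm_mul, Complex.norm_real, Real.norm_of_nonneg ht.le] at h
    exact le_of_mul_le_mul_left (by linarith) ht
  have hL : Filter.Tendsto (fun t : ℝ =>
      ‖φ (x + y) - φ x - φ y - t * (Complex.I * (φ x * φ y))‖ * (1 - t * ‖x + y‖))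
      (nhdsWithin 0 (Set.Ioi 0)) (nhds ‖φ (x + y) - φ x - φ y‖) := by
    have hcont : Continuous (fun t : ℝ =>
      ‖φ (x + y) - φ x - φ y - t * (Complex.I * (φ x * φ y))‖ * (1 - t * ‖x + y‖)) := by
      fun_prop
    have := hcont.tendsto 0
    refine Filter.Tendsto.mono_left ?_ nhdsWithin_le_nhds
    simpa using this
  have hR : Filter.Tendsto (fun t : ℝ => t * ‖x * y‖ * ‖Complex.I - t * φ (x + y)‖)
      (nhdsWithin 0 (Set.Ioi 0)) (nhds 0) := by
    have hcont : Continuous (fun t : ℝ => t * ‖x * y‖ * ‖Complex.I - t * φ (x + y)‖) := by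
      fun_prop
    have := hcont.tendsto 0
    refine Filter.Tendsto.mono_left ?_ nhdsWithin_le_nhds
    simpa using this
  have h0 : ‖φ (x + y) - φ x - φ y‖ ≤ 0 := by
    refine le_of_tendsto_of_tendsto hL hR ?_
    filter_upwards [self_mem_nhdsWithin] with t ht
    exact hle t ht
  have := norm_le_zero_iff.1 h0
  linear_combination this

theorem map_add_sa {φ : A → ℂ} (hc : Continuous φ) (hone : φ 1 = 1)
    (hmul : ∀ x y : A, φ x * φ y ∈ spectrum ℂ (x * y)) {x y : A} (hx : IsSelfAdjoint x)
    (hy : IsSelfAdjoint y) : φ (x + y) = φ x + φ y := by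
  by_cases hne : φ x = φ y
  · -- Translating `x` by `1` separates the two values.
    have h1 := map_add_real hc hone hmul hx 1
    have h := map_add_sa_of_ne hc hone hmul (isSelfAdjoint_add_real hx 1) hy
      (by rw [h1, hne]; simp)
    rw [add_right_comm, map_add_real hc hone hmul (hx.add hy) 1, h1] at h
    linear_combination h
  · exact map_add_sa_of_ne hc hone hmul hx hy hne

/-! ### Squares of self-adjoint elements -/

theorem isSelfAdjoint_sq {x : A} (hx : IsSelfAdjoint x) : IsSelfAdjoint (x * x) := by
  rw [isSelfAdjoint_iff, star_mul, hx.star_eq]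

theorem map_sq_sa_of_ne {φ : A → ℂ} (hc : Continuous φ) (hone : φ 1 = 1)
    (hmul : ∀ x y : A, φ x * φ y ∈ spectrum ℂ (x * y)) {x : A} (hx : IsSelfAdjoint x)
    (hne : φ x ≠ 0) : φ (x * x) = φ x * φ x := by
  obtain ⟨a, ha, -⟩ := map_sub_scalar hc hone hmul hx
  obtain ⟨r, s, h1, h2⟩ := exists_map_mul hc hone hmul hx hx (z := Complex.I) (w := -Complex.I)
    (by simp) (by simp)
  have e : (algebraMap ℂ A Complex.I - x) * (algebraMap ℂ A (-Complex.I) - x)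
      = x * x + algebraMap ℂ A (1 : ℝ) := by
    have hII : algebraMap ℂ A Complex.I * algebraMap ℂ A Complex.I = -1 := by
      rw [← map_mul, Complex.I_mul_I, map_neg, map_one]
    have hcomm : algebraMap ℂ A Complex.I * x = x * algebraMap ℂ A Complex.I :=
      Algebra.commutes _ _
    rw [map_neg, sub_mul, mul_sub, mul_sub, mul_neg, hII, hcomm]
    simp
    abel
  rw [e, map_add_real hc hone hmul (isSelfAdjoint_sq hx) 1] at h1 h2
  rw [ha] at h1 h2 ⊢
  have e := h1.symm.trans h2
  have e1 := congrArg Complex.im e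
  have e2 := congrArg Complex.re e
  simp at e1 e2
  have ha0 : a ≠ 0 := fun h => hne (by rw [ha, h, Complex.ofReal_zero])
  have hrs : r = s := by
    have : a * (r - s) = 0 := by linarith
    rcases mul_eq_zero.1 this with h | h
    · exact absurd h ha0
    · linarith
  have hr : r = a := by linarith
  rw [hr] at h1
  push_cast at h1
  linear_combination h1 - Complex.I_sq

theorem map_sq_sa {φ : A → ℂ} (hc : Continuous φ) (hone : φ 1 = 1)
    (hmul : ∀ x y : A, φ x * φ y ∈ spectrum ℂ (x * y)) {x : A} (hx : IsSelfAdjoint x) :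
    φ (x * x) = φ x * φ x := by
  by_cases hne : φ x = 0
  · have h1 := map_add_real hc hone hmul hx 1
    have h := map_sq_sa_of_ne hc hone hmul (isSelfAdjoint_add_real hx 1) (by rw [h1, hne]; simp)
    have e : (x + algebraMap ℂ A (1 : ℝ)) * (x + algebraMap ℂ A (1 : ℝ))
        = (x * x + (x + x)) + algebraMap ℂ A (1 : ℝ) := by
      simp only [Complex.ofReal_one, map_one]
      noncomm_ring
    rw [e, map_add_real hc hone hmul ((isSelfAdjoint_sq hx).add (hx.add hx)) 1,
      map_add_sa hc hone hmul (isSelfAdjoint_sq hx) (hx.add hx),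
      map_add_sa hc hone hmul hx hx, h1] at h
    push_cast at h
    linear_combination h
  · exact map_sq_sa_of_ne hc hone hmul hx hne

/-! ### From squares to products -/

/-- A unital linear functional preserving squares is multiplicative: on its kernel, the identity
`(xy - yx)² + (xy + yx)² = 2 (x (yxy) + (yxy) x)` kills both the commutator and the
anticommutator. -/
theorem jordan_mul {R : Type*} [Ring R] [Algebra ℂ R] (f : R →ₗ[ℂ] ℂ) (h1 : f 1 = 1)
    (hsq : ∀ x, f (x * x) = f x * f x) (x y : R) : f (x * y) = f x * f y := by
  have hj : ∀ x y, f (x * y) + f (y * x) = 2 * (f x * f y) := by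
    intro x y
    have h := hsq (x + y)
    simp only [add_mul, mul_add, map_add, hsq] at h
    linear_combination h
  have h0 : ∀ x y, f x = 0 → f (x * y) = 0 := by
    intro x y hx
    have ha := hj x y
    have hb := hj x (y * x * y)
    have hd := hsq (x * y - y * x)
    have hs := hsq (x * y + y * x)
    have e : (x * y - y * x) * (x * y - y * x) + (x * y + y * x) * (x * y + y * x)
        = (2 : ℂ) • (x * (y * x * y) + (y * x * y) * x) := by
      rw [two_smul]
      noncomm_ring
    have he := congrArg f e
    rw [map_add, hd, hs, map_smul, map_add f (x * (y * x * y)), hb, map_add, ha, hx] at he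
    simp only [zero_mul, mul_zero, add_zero, smul_zero, mul_self_eq_zero, map_sub] at he
    rw [hx] at ha
    linear_combination (ha + he) / 2
  have h := h0 (x - f x • 1) y (by simp [h1])
  rw [sub_mul, smul_mul_assoc, one_mul, map_sub, map_smul, smul_eq_mul] at h
  linear_combination h

/-! ### Extension to the whole algebra -/

theorem isSelfAdjoint_re (x : A) : IsSelfAdjoint ((2 : ℂ)⁻¹ • (x + star x)) := by
  rw [isSelfAdjoint_iff, star_smul, star_add, star_star, add_comm]
  simp

theorem isSelfAdjoint_im (x : A) : IsSelfAdjoint ((2 * Complex.I)⁻¹ • (x - star x)) := by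
  rw [isSelfAdjoint_iff, star_smul, star_sub, star_star, ← neg_sub, smul_neg, ← neg_smul]
  simp

end SpectralMul

open SpectralMul in
theorem stmt_18 (φ : A → ℂ) (hc : Continuous φ)
    (hone : φ 1 = 1)
    (hmul : ∀ x y : A, φ x * φ y ∈ spectrum ℂ (x * y))
    (ψ : A → ℂ)
    (hψ : ∀ x : A, ψ x = φ ((2 : ℂ)⁻¹ • (x + star x)) +
      Complex.I * φ ((2 * Complex.I)⁻¹ • (x - star x))) :
    (∀ x y : A, ψ (x + y) = ψ x + ψ y) ∧
    (∀ (c : ℂ) (x : A), ψ (c • x) = c * ψ x) ∧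
    (∀ x y : A, ψ (x * y) = ψ x * ψ y) := by
  have hadd : ∀ x y : A, ψ (x + y) = ψ x + ψ y := by
    intro x y
    have e1 : (2 : ℂ)⁻¹ • (x + y + star (x + y))
        = (2 : ℂ)⁻¹ • (x + star x) + (2 : ℂ)⁻¹ • (y + star y) := by
      rw [star_add, ← smul_add]; congr 1; abel
    have e2 : (2 * Complex.I)⁻¹ • (x + y - star (x + y))
        = (2 * Complex.I)⁻¹ • (x - star x) + (2 * Complex.I)⁻¹ • (y - star y) := by
      rw [star_add, ← smul_add]; congr 1; abel
    rw [hψ, hψ x, hψ y, e1, e2, map_add_sa hc hone hmul (isSelfAdjoint_re x) (isSelfAdjoint_re y),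
      map_add_sa hc hone hmul (isSelfAdjoint_im x) (isSelfAdjoint_im y)]
    ring
  have hreal : ∀ (t : ℝ) (x : A), ψ ((t : ℂ) • x) = t * ψ x := by
    intro t x
    have hs : star ((t : ℂ) • x) = (t : ℂ) • star x := by rw [star_smul]; simp
    rw [hψ, hψ x, hs, ← smul_add, ← smul_sub, smul_comm _ (t : ℂ), smul_comm _ (t : ℂ),
      map_smul_sa hc hone hmul (isSelfAdjoint_re x), map_smul_sa hc hone hmul (isSelfAdjoint_im x)]
    ring
  have hI : ∀ x : A, ψ (Complex.I • x) = Complex.I * ψ x := by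
    intro x
    have hs : star (Complex.I • x) = -(Complex.I • star x) := by rw [star_smul]; simp
    have e1 : (2 : ℂ)⁻¹ • (Complex.I • x + star (Complex.I • x))
        = ((-1 : ℝ) : ℂ) • ((2 * Complex.I)⁻¹ • (x - star x)) := by
      rw [hs, ← sub_eq_add_neg, ← smul_sub, smul_smul, smul_smul]
      congr 1
      simp
      ring
    have e2 : (2 * Complex.I)⁻¹ • (Complex.I • x - star (Complex.I • x))
        = (2 : ℂ)⁻¹ • (x + star x) := by
      rw [hs, sub_neg_eq_add, ← smul_add, smul_smul]
      congr 1
      field_simp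
    rw [hψ, hψ x, e1, e2, map_smul_sa hc hone hmul (isSelfAdjoint_im x)]
    push_cast
    linear_combination -φ ((2 * Complex.I)⁻¹ • (x - star x)) * Complex.I_sq
  have hsmul : ∀ (c : ℂ) (x : A), ψ (c • x) = c * ψ x := by
    intro c x
    have e : c • x = (c.re : ℂ) • x + (c.im : ℂ) • (Complex.I • x) := by
      rw [smul_smul, ← add_smul, Complex.re_add_im]
    rw [e, hadd, hreal, hreal, hI]
    linear_combination ψ x * Complex.re_add_im c
  have hsa : ∀ x : A, IsSelfAdjoint x → ψ x = φ x := by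
    intro x hx
    have h0 : φ 0 = 0 := by simpa using map_smul_sa hc hone hmul (IsSelfAdjoint.zero A) 0
    rw [hψ, hx.star_eq, sub_self, smul_zero, h0, ← two_smul ℂ x, smul_smul]
    simp
  let f : A →ₗ[ℂ] ℂ := { toFun := ψ, map_add' := hadd, map_smul' := hsmul }
  have hf1 : f 1 = 1 := (hsa 1 (IsSelfAdjoint.one A)).trans hone
  have hfsa : ∀ x : A, IsSelfAdjoint x → f (x * x) = f x * f x := by
    intro x hx
    change ψ (x * x) = ψ x * ψ x
    rw [hsa _ (isSelfAdjoint_sq hx), hsa _ hx, map_sq_sa hc hone hmul hx]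
  have hsq : ∀ x : A, f (x * x) = f x * f x := by
    intro x
    obtain ⟨h, k, hh, hk, rfl⟩ : ∃ h k : A, IsSelfAdjoint h ∧ IsSelfAdjoint k ∧
        x = h + Complex.I • k := by
      refine ⟨_, _, isSelfAdjoint_re x, isSelfAdjoint_im x, ?_⟩
      have : Complex.I * (2 * Complex.I)⁻¹ = (2 : ℂ)⁻¹ := by field_simp
      rw [smul_smul, this, ← smul_add, add_add_sub_cancel, ← two_smul ℂ x, smul_smul]
      simp
    have hp := hfsa _ (hh.add hk)
    simp only [add_mul, mul_add, map_add, hfsa h hh, hfsa k hk] at hp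
    simp only [add_mul, mul_add, map_add, map_smul, smul_mul_assoc, mul_smul_comm, smul_eq_mul,
      hfsa h hh, hfsa k hk]
    linear_combination Complex.I * hp
  exact ⟨hadd, hsmul, jordan_mul f hf1 hsq⟩
end
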